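/- Let R₀ = ℤ[i, 1/2] and let R be the localization of the polynomial ring R₀[a,b] away from the element a² + b². Call an element f ∈ R homogeneous of degree m ∈ ℤ if the substitution a ↦ t·a, b ↦ t·b sends f to t^m·f in R[t, t⁻¹]. Then for each m ∈ ℤ, the R₀-module of homogeneous elements of degree m in R is free with basis the (infinite) family { (a + i·b)^p · (a - i·b)^q : p, q ∈ ℤ, p + q = m } (every homogeneous element of degree m is a finite R₀-linear combination of these, uniquely). -/

import Mathlib

open MvPolynomial

noncomputable section

/-- `R₀ = ℤ[i, 1/2]`, realized as the Gaussian integers localized away from `2`. -/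
abbrev R0 : Type := Localization.Away (2 : GaussianInt)

/-- The polynomial ring `R₀[a,b]`, with `a = X 0`, `b = X 1`. -/
abbrev A0 : Type := MvPolynomial (Fin 2) R0

/-- The variable `a`. -/
def aV : A0 := X 0

/-- The variable `b`. -/
def bV : A0 := X 1

/-- `R = R₀[a,b][1/(a²+b²)]`, the affine algebra of the group scheme `K̃ ⊗ ℤ[i,1/2]`. -/
abbrev R : Type := Localization.Away (aV ^ 2 + bV ^ 2)

/-- `S = R[t,t⁻¹]`, realized as `R[t]` localized away from `t`. -/
abbrev S : Type := Localization.Away (Polynomial.X : Polynomial R)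

/-- The element `t` of `S`. -/
def tS : S := algebraMap (Polynomial R) S Polynomial.X

/-- The imaginary unit `i` as an element of `R`. -/
def iR : R := algebraMap R0 R (algebraMap GaussianInt R0 ⟨0, 1⟩)

/-- The image of `a` in `R`. -/
def aR : R := algebraMap A0 R aV

/-- The image of `b` in `R`. -/
def bR : R := algebraMap A0 R bV

/-- The substitution `a ↦ t·a`, `b ↦ t·b` on the level of the variables. -/
def substVal (j : Fin 2) : S := tS * algebraMap R S (algebraMap A0 R (X j))

def iZ : R0 := algebraMap GaussianInt R0 ⟨0, 1⟩

lemma iZ_sq : iZ * iZ = -1 := by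
  unfold iZ
  rw [← map_mul, ← map_one (algebraMap GaussianInt R0), ← map_neg]
  congr 1

lemma exists_half : ∃ h : R0, 2 * h = 1 := by
  have := IsLocalization.Away.algebraMap_isUnit (S := R0) (2 : GaussianInt)
  rw [map_ofNat] at this
  exact this.exists_right_inv

abbrev LL : Type := AddMonoidAlgebra R0 (ℤ × ℤ)

lemma exists_psi : ∃ ψ : R →ₐ[R0] LL, ψ (aR + iR * bR) = AddMonoidAlgebra.single (1, 0) 1 ∧
    ψ (aR - iR * bR) = AddMonoidAlgebra.single (0, 1) 1 := by
  obtain ⟨h, hh⟩ := exists_half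
  set x : LL := AddMonoidAlgebra.single (1, 0) 1 with hx
  set y : LL := AddMonoidAlgebra.single (0, 1) 1 with hy
  set H : LL := algebraMap R0 LL h with hH
  set J : LL := algebraMap R0 LL iZ with hJ
  have hH2 : 2 * H = 1 := by
    rw [hH, ← map_ofNat (algebraMap R0 LL) 2, ← map_mul, hh, map_one]
  have hJ2 : J * J = -1 := by
    rw [hJ, ← map_mul, iZ_sq, map_neg, map_one]
  let ψ0 : A0 →ₐ[R0] LL := aeval ![H * (x + y), - J * H * (x - y)]
  have ha : ψ0 aV = H * (x + y) := by simp [ψ0, aV]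
  have hb : ψ0 bV = - J * H * (x - y) := by simp [ψ0, bV]
  have hxy : ψ0 (aV ^ 2 + bV ^ 2) = x * y := by
    rw [map_add, map_pow, map_pow, ha, hb]
    linear_combination (H^2 * (x-y)^2) * hJ2 + (2 * H + 1) * x * y * hH2
  have hu : IsUnit (x * y) := by
    refine IsUnit.of_mul_eq_one (AddMonoidAlgebra.single (-1, -1) 1) ?_
    simp [hx, hy, AddMonoidAlgebra.single_mul_single, AddMonoidAlgebra.one_def]
    rfl
  let ψ : R →ₐ[R0] LL := IsLocalization.liftAlgHom (M := Submonoid.powers (aV ^ 2 + bV ^ 2))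
    (f := ψ0) (by
      rintro ⟨_, n, rfl⟩
      simp only [map_pow, hxy]
      exact hu.pow n)
  have hψ : ∀ z, ψ (algebraMap A0 R z) = ψ0 z := fun z => by
    simp only [ψ]
    exact IsLocalization.lift_eq _ _
  have hi : ψ iR = J := ψ.commutes iZ
  refine ⟨ψ, ?_, ?_⟩
  · rw [map_add, map_mul, hi, aR, bR, hψ, hψ, ha, hb]
    linear_combination (-H * (x-y)) * hJ2 + x * hH2
  · rw [map_sub, map_mul, hi, aR, bR, hψ, hψ, ha, hb]
    linear_combination (H * (x-y)) * hJ2 + y * hH2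

lemma ua_mul_ub : (aR + iR * bR) * (aR - iR * bR) = algebraMap A0 R (aV ^ 2 + bV ^ 2) := by
  have : iR * iR = -1 := by
    have := congrArg (algebraMap R0 R) iZ_sq
    rw [map_mul, map_neg, map_one] at this
    exact this
  rw [map_add, map_pow, map_pow]
  change _ = aR ^ 2 + bR ^ 2
  linear_combination (-bR^2) * this

lemma mem_span_all (ua ub : Rˣ) (hua : (ua : R) = aR + iR * bR) (hub : (ub : R) = aR - iR * bR)
    (f : R) : f ∈ Submodule.span R0
      (Set.range (fun pq : ℤ × ℤ => ((ua ^ pq.1 * ub ^ pq.2 : Rˣ) : R))) := by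
  let M : Submonoid R :=
    { carrier := Set.range (fun pq : ℤ × ℤ => ((ua ^ pq.1 * ub ^ pq.2 : Rˣ) : R))
      one_mem' := ⟨(0, 0), by simp⟩
      mul_mem' := by
        rintro _ _ ⟨p, rfl⟩ ⟨q, rfl⟩
        refine ⟨p + q, ?_⟩
        simp only [Prod.fst_add, Prod.snd_add, zpow_add, ← Units.val_mul]
        congr 1
        exact mul_mul_mul_comm _ _ _ _ }
  have key : f ∈ Algebra.adjoin R0 (M : Set R) := by
    set B := Algebra.adjoin R0 (M : Set R) with hB
    have hM : ∀ p q : ℤ, ((ua ^ p * ub ^ q : Rˣ) : R) ∈ B :=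
      fun p q => Algebra.subset_adjoin ⟨(p, q), rfl⟩
    have h1 : aR + iR * bR ∈ B := by simpa [hua] using hM 1 0
    have h2 : aR - iR * bR ∈ B := by simpa [hub] using hM 0 1
    obtain ⟨h, hh⟩ := exists_half
    have hh' : 2 * algebraMap R0 R h = 1 := by
      rw [← map_ofNat (algebraMap R0 R) 2, ← map_mul, hh, map_one]
    have hi2 : iR * iR = -1 := by
      have := congrArg (algebraMap R0 R) iZ_sq
      rw [map_mul, map_neg, map_one] at this
      exact this
    have hi : iR ∈ B := B.algebraMap_mem iZ
    have hhB : algebraMap R0 R h ∈ B := B.algebraMap_mem h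
    have ha : aR ∈ B := by
      have := B.mul_mem hhB (B.add_mem h1 h2)
      convert this using 1
      linear_combination (-aR) * hh'
    have hb : bR ∈ B := by
      have := B.mul_mem (B.neg_mem hi) (B.mul_mem hhB (B.sub_mem h1 h2))
      convert this using 1
      linear_combination (-bR) * hh' + 2 * algebraMap R0 R h * bR * hi2
    have hA : ∀ z : A0, algebraMap A0 R z ∈ B := by
      intro z
      induction z using MvPolynomial.induction_on with
      | C c => exact B.algebraMap_mem c
      | add p q hp hq => rw [map_add]; exact B.add_mem hp hq
      | mul_X p n hp =>
        rw [map_mul]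
        refine B.mul_mem hp ?_
        fin_cases n
        · exact ha
        · exact hb
    obtain ⟨⟨z, ⟨_, n, rfl⟩⟩, hz⟩ :=
      IsLocalization.surj (Submonoid.powers (aV ^ 2 + bV ^ 2)) f
    simp only [map_pow, ← ua_mul_ub, ← hua, ← hub] at hz
    have : f = algebraMap A0 R z * ((ua ^ (-1 : ℤ) * ub ^ (-1 : ℤ) : Rˣ) : R) ^ n := by
      rw [← hz, mul_assoc, ← mul_pow, ← Units.val_mul, ← Units.val_mul]
      have : ua * ub * (ua ^ (-1 : ℤ) * ub ^ (-1 : ℤ)) = 1 := by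
        rw [zpow_neg_one, zpow_neg_one, mul_mul_mul_comm]; simp
      rw [this]; simp
    rw [this]
    exact B.mul_mem (hA z) (B.pow_mem (hM _ _) n)
  have h3 := (Algebra.adjoin_eq_span (R := R0) (M : Set R))
  rw [Submonoid.closure_eq] at h3
  have : f ∈ Subalgebra.toSubmodule (Algebra.adjoin R0 (M : Set R)) := key
  rw [h3] at this
  exact this

lemma aux_units {G H : Type*} [CommGroup G] [CommGroup H] (g k : G →* H) (u v : G) (t : H)
    (hu : g u = t * k u) (hv : g v = t * k v) (p q : ℤ) :
    g (u ^ p * v ^ q) = t ^ (p + q) * k (u ^ p * v ^ q) := by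
  rw [map_mul, map_mul, map_zpow, map_zpow, map_zpow, map_zpow, hu, hv, mul_zpow, mul_zpow,
    zpow_add, mul_mul_mul_comm]

lemma aux_linind {k E : Type*} [CommRing k] [AddCommGroup E] [Module k E]
    (g : E →ₗ[k] AddMonoidAlgebra k (ℤ × ℤ)) (e : ℤ → E) (m : ℤ)
    (h : ∀ p, g (e p) = AddMonoidAlgebra.single (p, m - p) 1) : LinearIndependent k e := by
  apply LinearIndependent.of_comp g
  have := (AddMonoidAlgebra.basis (ℤ × ℤ) k).linearIndependent.comp
    (fun p : ℤ => (p, m - p)) (fun a b h => (Prod.ext_iff.1 h).1)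
  have e1 : g ∘ e = (AddMonoidAlgebra.basis (ℤ × ℤ) k) ∘ (fun p : ℤ => (p, m - p)) := by
    funext p
    exact h p
  rw [e1]
  exact this

lemma exists_theta : ∃ θ : S →+* LaurentPolynomial R, θ tS = LaurentPolynomial.T 1 ∧
    ∀ r, θ (algebraMap R S r) = LaurentPolynomial.C r := by
  have hu : IsUnit ((Polynomial.toLaurent : Polynomial R →+* LaurentPolynomial R)
      Polynomial.X) := by
    rw [Polynomial.toLaurent_X]; exact LaurentPolynomial.isUnit_T 1
  refine ⟨IsLocalization.Away.lift (Polynomial.X : Polynomial R) hu, ?_, ?_⟩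
  · rw [tS, IsLocalization.Away.lift_eq, Polynomial.toLaurent_X]
  · intro r
    rw [IsScalarTower.algebraMap_apply R (Polynomial R) S, IsLocalization.Away.lift_eq,
      Polynomial.algebraMap_eq, Polynomial.toLaurent_C]

/-- For each `m ∈ ℤ`, the `R₀`-module of homogeneous elements of degree `m` in `R`
(those `f` with `γ(f) = t^m·f`, `γ` being induced by `a ↦ ta`, `b ↦ tb`) is free with
basis the family `(a+ib)^p·(a-ib)^q`, `p + q = m` (indexed by `p ∈ ℤ`, `q = m - p`):
each basis vector is homogeneous of degree `m`, the family is linearly independent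
over `R₀`, and it spans all homogeneous elements of degree `m`. -/
theorem stmt_13 (γ : R →+* S)
    (hγ : ∀ a : A0, γ (algebraMap A0 R a) = aeval substVal a)
    (uT : Sˣ) (huT : (uT : S) = tS)
    (ua ub : Rˣ) (hua : (ua : R) = aR + iR * bR) (hub : (ub : R) = aR - iR * bR)
    (m : ℤ) (e : ℤ → R) (he : ∀ p : ℤ, e p = ((ua ^ p * ub ^ (m - p) : Rˣ) : R)) :
    (∀ p : ℤ, γ (e p) = ((uT ^ m : Sˣ) : S) * algebraMap R S (e p)) ∧
    LinearIndependent R0 e ∧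
    (∀ f : R, γ f = ((uT ^ m : Sˣ) : S) * algebraMap R S f →
      f ∈ Submodule.span R0 (Set.range e)) := by
  have hγ0 : ∀ c : R0, γ (algebraMap R0 R c) = algebraMap R S (algebraMap R0 R c) := by
    intro c
    have := hγ (MvPolynomial.C c)
    rw [MvPolynomial.aeval_C] at this
    rw [← IsScalarTower.algebraMap_apply R0 R S]
    exact this
  have hγa : γ aR = tS * algebraMap R S aR := (hγ (X 0)).trans (aeval_X _ _)
  have hγb : γ bR = tS * algebraMap R S bR := (hγ (X 1)).trans (aeval_X _ _)
  have hγi : γ iR = algebraMap R S iR := hγ0 _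
  have hUa : Units.map (γ : R →* S) ua = uT * Units.map (algebraMap R S : R →* S) ua := by
    ext
    simp only [Units.coe_map, MonoidHom.coe_coe, Units.val_mul, hua, huT, map_add, map_mul,
      hγa, hγb, hγi]
    ring
  have hUb : Units.map (γ : R →* S) ub = uT * Units.map (algebraMap R S : R →* S) ub := by
    ext
    simp only [Units.coe_map, MonoidHom.coe_coe, Units.val_mul, hub, huT, map_sub, map_mul,
      hγa, hγb, hγi]
    ring
  have hpq : ∀ p q : ℤ, γ ((ua ^ p * ub ^ q : Rˣ) : R) =
      ((uT ^ (p + q) : Sˣ) : S) * algebraMap R S ((ua ^ p * ub ^ q : Rˣ) : R) := by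
    intro p q
    have : Units.map (γ : R →* S) (ua ^ p * ub ^ q) =
        uT ^ (p + q) * Units.map (algebraMap R S : R →* S) (ua ^ p * ub ^ q) := by
      exact aux_units _ _ _ _ _ hUa hUb p q
    exact congrArg Units.val this
  refine ⟨?_, ?_, ?_⟩
  · intro p
    rw [he, hpq]
    simp
  · obtain ⟨ψ, h1, h2⟩ := exists_psi
    have hz : ∀ p q : ℤ, ψ ((ua ^ p * ub ^ q : Rˣ) : R) = AddMonoidAlgebra.single (p, q) 1 := by
      let F : Multiplicative (ℤ × ℤ) →* LL := AddMonoidAlgebra.of R0 (ℤ × ℤ)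
      let G : Multiplicative (ℤ × ℤ) →* LLˣ := F.toHomUnits
      have e1 : Units.map (ψ : R →* LL) ua = G (Multiplicative.ofAdd (1, 0)) := by
        ext1
        simp only [Units.coe_map]
        refine (congrArg ψ hua).trans h1
      have e2 : Units.map (ψ : R →* LL) ub = G (Multiplicative.ofAdd (0, 1)) := by
        ext1
        simp only [Units.coe_map]
        refine (congrArg ψ hub).trans h2
      intro p q
      have : Units.map (ψ : R →* LL) (ua ^ p * ub ^ q) = G (Multiplicative.ofAdd (p, q)) := by
        rw [map_mul, map_zpow, map_zpow, e1, e2, ← map_zpow G, ← map_zpow G, ← map_mul G,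
          ← ofAdd_zsmul, ← ofAdd_zsmul, ← ofAdd_add]
        simp
      exact congrArg Units.val this
    exact aux_linind ψ.toLinearMap e m (fun p => by rw [he]; exact hz _ _)
  · obtain ⟨θ, ht, hθ⟩ := exists_theta
    have hT : ∀ n : ℤ, θ ((uT ^ n : Sˣ) : S) = LaurentPolynomial.T n := by
      intro n
      let F : Multiplicative ℤ →* LaurentPolynomial R := AddMonoidAlgebra.of R ℤ
      let G : Multiplicative ℤ →* (LaurentPolynomial R)ˣ := F.toHomUnits
      have e1 : Units.map (θ : S →* LaurentPolynomial R) uT = G (Multiplicative.ofAdd 1) := by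
        ext1
        simp only [Units.coe_map]
        refine (congrArg θ huT).trans ht
      have : Units.map (θ : S →* LaurentPolynomial R) (uT ^ n) = G (Multiplicative.ofAdd n) := by
        rw [map_zpow, e1, ← map_zpow, ← ofAdd_zsmul]
        simp
      exact congrArg Units.val this
    have hc : ∀ (n : ℤ) (r : R), (LaurentPolynomial.T n * LaurentPolynomial.C r) =
        (AddMonoidAlgebra.single n r : LaurentPolynomial R) := by
      intro n r
      rw [mul_comm, ← LaurentPolynomial.single_eq_C_mul_T]
    have main : ∀ f : R, (θ (γ f)).coeff m ∈ Submodule.span R0 (Set.range e) := by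
      intro f
      induction mem_span_all ua ub hua hub f using Submodule.span_induction with
      | mem x hx =>
        obtain ⟨⟨p, q⟩, rfl⟩ := hx
        simp only
        rw [hpq, map_mul, hT, hθ, hc]
        by_cases h : p + q = m
        · subst h
          simp only [AddMonoidAlgebra.coeff_single, Finsupp.single_eq_same]
          refine Submodule.subset_span ⟨p, ?_⟩
          rw [he]; simp
        · rw [AddMonoidAlgebra.coeff_single, Finsupp.single_apply, if_neg h]
          exact Submodule.zero_mem _
      | zero => simp
      | add x y _ _ hx hy =>
        rw [map_add, map_add]
        exact Submodule.add_mem _ hx hy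
      | smul c x _ hx =>
        have := Submodule.smul_mem _ c hx
        convert this using 1
        rw [Algebra.smul_def, map_mul, map_mul, hγ0, hθ, Algebra.smul_def,
          ← LaurentPolynomial.smul_eq_C_mul]
        rfl
    intro f hf
    have := main f
    rw [hf, map_mul, hT, hθ, hc, AddMonoidAlgebra.coeff_single, Finsupp.single_eq_same] at this
    exact this
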